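/- The function g : [0, 1/2] → ℝ defined by g(x) = h((1 − √(1 − 4x²))/2) is convex on [0, 1/2] and monotone nondecreasing on [0, 1/2]. -/

import Mathlib

/-- Binary entropy (natural logarithm; the claim is base-independent). -/
noncomputable def binEnt (x : ℝ) : ℝ := -(x * Real.log x) - (1 - x) * Real.log (1 - x)

/-- The function `g(x) = h((1 − √(1 − 4x²))/2)`. -/
noncomputable def gfun (x : ℝ) : ℝ := binEnt ((1 - Real.sqrt (1 - 4 * x ^ 2)) / 2)

lemma binEnt_eq_binEntropy : binEnt = Real.binEntropy := by
  ext x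
  simp only [binEnt, Real.binEntropy, Real.log_inv]
  ring

lemma two_mul_le_log_one_add_sub_log_one_sub {s : ℝ} (h0 : 0 ≤ s) (h1 : s < 1) :
    2 * s ≤ Real.log (1 + s) - Real.log (1 - s) := by
  have h := Real.hasSum_log_sub_log_of_abs_lt_one (abs_lt.mpr ⟨by linarith, h1⟩)
  have := le_hasSum h 0 (fun k _ => by positivity)
  simpa using this

lemma hasDerivAt_sqrt_one_sub_four_mul_sq {x : ℝ} (hx : 0 < 1 - 4 * x ^ 2) :
    HasDerivAt (fun y : ℝ => √(1 - 4 * y ^ 2)) (-4 * x / √(1 - 4 * x ^ 2)) x := by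
  have h : HasDerivAt (fun y : ℝ => 1 - 4 * y ^ 2) (-8 * x) x := by
    refine (((hasDerivAt_pow 2 x).const_mul 4).const_sub 1).congr_deriv ?_
    norm_num
    ring
  refine (h.sqrt hx.ne').congr_deriv ?_
  have := (Real.sqrt_pos.mpr hx).ne'
  field_simp
  ring

lemma sqrt_one_sub_four_mul_sq_mem_Ioo {x : ℝ} (hx : x ∈ Set.Ioo (0 : ℝ) (1 / 2)) :
    √(1 - 4 * x ^ 2) ∈ Set.Ioo (0 : ℝ) 1 := by
  obtain ⟨h0, h1⟩ := hx
  refine ⟨Real.sqrt_pos.mpr (by nlinarith), ?_⟩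
  rw [Real.sqrt_lt' one_pos]
  nlinarith

lemma hasDerivAt_gfun {x : ℝ} (hx : x ∈ Set.Ioo (0 : ℝ) (1 / 2)) :
    HasDerivAt gfun (2 * x * (Real.log (1 + √(1 - 4 * x ^ 2)) -
      Real.log (1 - √(1 - 4 * x ^ 2))) / √(1 - 4 * x ^ 2)) x := by
  obtain ⟨hs0, hs1⟩ := sqrt_one_sub_four_mul_sq_mem_Ioo hx
  have hs := hasDerivAt_sqrt_one_sub_four_mul_sq (Real.sqrt_pos.mp hs0)
  have hp := (hs.const_sub 1).div_const 2
  have hh := Real.hasDerivAt_binEntropy (p := (1 - √(1 - 4 * x ^ 2)) / 2)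
    (by linarith) (by linarith)
  have hg := hh.comp x hp
  rw [← binEnt_eq_binEntropy] at hg
  refine hg.congr_deriv ?_
  rw [show 1 - (1 - √(1 - 4 * x ^ 2)) / 2 = (1 + √(1 - 4 * x ^ 2)) / 2 by ring,
    Real.log_div (by linarith) two_ne_zero, Real.log_div (by linarith) two_ne_zero]
  field_simp
  ring

lemma hasDerivAt_deriv_gfun {x : ℝ} (hx : x ∈ Set.Ioo (0 : ℝ) (1 / 2)) :
    HasDerivAt (fun y : ℝ => 2 * y * (Real.log (1 + √(1 - 4 * y ^ 2)) -
      Real.log (1 - √(1 - 4 * y ^ 2))) / √(1 - 4 * y ^ 2))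
      (2 * (Real.log (1 + √(1 - 4 * x ^ 2)) - Real.log (1 - √(1 - 4 * x ^ 2)) -
        2 * √(1 - 4 * x ^ 2)) / √(1 - 4 * x ^ 2) ^ 3) x := by
  obtain ⟨hs0, hs1⟩ := sqrt_one_sub_four_mul_sq_mem_Ioo hx
  have hs := hasDerivAt_sqrt_one_sub_four_mul_sq (Real.sqrt_pos.mp hs0)
  have hsq := Real.sq_sqrt (Real.sqrt_pos.mp hs0).le
  have hlog := ((hs.const_add 1).log (by linarith)).sub ((hs.const_sub 1).log (by linarith))
  refine ((((hasDerivAt_id x).const_mul 2).mul hlog).div hs hs0.ne').congr_deriv ?_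
  simp only [id, Pi.sub_apply, Pi.mul_apply]
  generalize √(1 - 4 * x ^ 2) = s at *
  have h1 : 1 + s ≠ 0 := by linarith
  have h2 : 1 - s ≠ 0 := by linarith
  have hx2 : x ^ 2 = (1 - s ^ 2) / 4 := by linarith
  field_simp
  ring_nf
  rw [hx2]
  ring

lemma continuous_gfun : Continuous gfun := by
  have : gfun = fun x => Real.binEntropy ((1 - √(1 - 4 * x ^ 2)) / 2) := by
    rw [← binEnt_eq_binEntropy]
    rfl
  rw [this]
  fun_prop

lemma convexOn_gfun : ConvexOn ℝ (Set.Icc (0 : ℝ) (1 / 2)) gfun := by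
  refine convexOn_of_hasDerivWithinAt2_nonneg (convex_Icc _ _) continuous_gfun.continuousOn
    (fun x hx => (hasDerivAt_gfun (by rwa [interior_Icc] at hx)).hasDerivWithinAt)
    (fun x hx => (hasDerivAt_deriv_gfun (by rwa [interior_Icc] at hx)).hasDerivWithinAt) ?_
  intro x hx
  rw [interior_Icc] at hx
  obtain ⟨hs0, hs1⟩ := sqrt_one_sub_four_mul_sq_mem_Ioo hx
  have := two_mul_le_log_one_add_sub_log_one_sub hs0.le hs1
  exact div_nonneg (by linarith) (by positivity)

lemma monotoneOn_gfun : MonotoneOn gfun (Set.Icc (0 : ℝ) (1 / 2)) := by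
  intro x hx y hy hxy
  unfold gfun
  rw [binEnt_eq_binEntropy]
  have hmem (z : ℝ) : (1 - √(1 - 4 * z ^ 2)) / 2 ∈ Set.Icc (0 : ℝ) 2⁻¹ := by
    have h0 := Real.sqrt_nonneg (1 - 4 * z ^ 2)
    have h1 : √(1 - 4 * z ^ 2) ≤ 1 := Real.sqrt_le_one.mpr (by nlinarith [sq_nonneg z])
    constructor <;> linarith
  refine Real.binEntropy_strictMonoOn.monotoneOn (hmem x) (hmem y) ?_
  have hx0 := hx.1
  gcongr

/-- `g` is convex and monotone nondecreasing on `[0, 1/2]`. -/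
theorem stmt_10 :
    ConvexOn ℝ (Set.Icc (0:ℝ) (1/2)) gfun ∧ MonotoneOn gfun (Set.Icc (0:ℝ) (1/2)) :=
  ⟨convexOn_gfun, monotoneOn_gfun⟩
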